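/- (Percentile formula.) Assume Λ ≠ 0 and let L̄ = Φ(Ξ/(ζ√T) − ΛY/ζ), where Y is standard normal. Then for every ν ∈ (0,1), the value L_ν = Φ((Σ·Φ⁻¹(p) + |Λ|·Φ⁻¹(ν))/ζ) satisfies ℙ[L̄ ≤ L_ν] = ν, where p = Φ(Ξ/(Σ√T)). -/

import Mathlib

open MeasureTheory ProbabilityTheory Real Filter Set

/-- The density of the standard normal distribution. -/
noncomputable def stdPdf (y : ℝ) : ℝ := Real.exp (-y ^ 2 / 2) / Real.sqrt (2 * Real.pi)

/-- The cumulative distribution function `Φ` of the standard normal distribution. -/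
noncomputable def stdCdf (x : ℝ) : ℝ := ∫ y in Set.Iic x, stdPdf y

/-- The inverse `Φ⁻¹` of the standard normal cumulative distribution function: since `stdCdf`
is injective, `stdCdfInv` is the genuine inverse of `Φ` on `(0,1)`. -/
noncomputable def stdCdfInv : ℝ → ℝ := Function.invFun stdCdf

/-! Since `p = Φ(Ξ / (Σ√T))`, injectivity of `Φ` gives `Σ Φ⁻¹(p) = Ξ / √T`, so with
`a = Ξ / (ζ√T)` and `b = -Λ / ζ` the claim is `ℙ[Φ(a + bY) ≤ Φ(a + |b| Φ⁻¹(ν))] = ν`. As `Φ` is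
strictly increasing, the event is `(b / |b|) Y ≤ Φ⁻¹(ν)`, and `(b / |b|) Y = ±Y` is again standard
normal. -/

section Cdf

variable (μ : Measure ℝ) [IsProbabilityMeasure μ]

lemma strictMono_cdf [μ.IsOpenPosMeasure] : StrictMono (cdf μ) := by
  intro a b hab
  have hpos : 0 < (cdf μ).measure (Ioc a b) := by
    rw [measure_cdf]
    exact (isOpen_Ioo.measure_pos μ (nonempty_Ioo.2 hab)).trans_le
      (measure_mono Ioo_subset_Ioc_self)
  rwa [StieltjesFunction.measure_Ioc, ENNReal.ofReal_pos, sub_pos] at hpos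

lemma continuous_cdf [NullSingletonClass μ] : Continuous (cdf μ) := by
  refine continuous_iff_continuousAt.2 fun x ↦ ?_
  have hjump : ENNReal.ofReal (cdf μ x - Function.leftLim (cdf μ) x) = 0 := by
    rw [← StieltjesFunction.measure_singleton, measure_cdf, measure_singleton]
  rw [(monotone_cdf μ).continuousAt_iff_leftLim_eq_rightLim, StieltjesFunction.rightLim_eq]
  exact ((monotone_cdf μ).leftLim_le le_rfl).antisymm
    (sub_nonpos.1 (ENNReal.ofReal_eq_zero.1 hjump))

lemma Ioo_subset_range_cdf [NullSingletonClass μ] : Ioo 0 1 ⊆ range (cdf μ) := by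
  rintro ν ⟨hν0, hν1⟩
  exact mem_range_of_exists_le_of_exists_ge (continuous_cdf μ)
    ((tendsto_cdf_atBot μ).eventually_le_const hν0).exists
    ((tendsto_cdf_atTop μ).eventually_const_le hν1).exists

end Cdf

lemma stdPdf_eq_gaussianPDFReal : stdPdf = gaussianPDFReal 0 1 := by
  funext y
  simp only [stdPdf, gaussianPDFReal, NNReal.coe_one, mul_one, sub_zero, div_eq_inv_mul]

lemma stdCdf_eq_cdf : stdCdf = cdf (gaussianReal 0 1) := by
  funext x
  rw [cdf_eq_real, measureReal_def, gaussianReal_apply_eq_integral 0 one_ne_zero,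
    ENNReal.toReal_ofReal (integral_nonneg (gaussianPDFReal_nonneg 0 1)), stdCdf,
    stdPdf_eq_gaussianPDFReal]

lemma stdCdf_strictMono : StrictMono stdCdf := by
  have := (gaussianReal_absolutelyContinuous' 0 one_ne_zero).isOpenPosMeasure
  exact stdCdf_eq_cdf ▸ strictMono_cdf (gaussianReal 0 1)

lemma stdCdfInv_stdCdf (x : ℝ) : stdCdfInv (stdCdf x) = x :=
  Function.leftInverse_invFun stdCdf_strictMono.injective x

lemma stdCdf_stdCdfInv {ν : ℝ} (hν : ν ∈ Ioo 0 1) : stdCdf (stdCdfInv ν) = ν := by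
  have := nullSingletonClass_gaussianReal (μ := 0) one_ne_zero
  exact Function.invFun_eq (stdCdf_eq_cdf ▸ Ioo_subset_range_cdf (gaussianReal 0 1) hν)

section Gaussian

variable {Ω : Type*} [MeasurableSpace Ω] {P : Measure Ω} {Y : Ω → ℝ}

lemma hasLaw_const_mul_gaussianReal_of_sq_eq_one {v : NNReal} {c : ℝ}
    (hY : HasLaw Y (gaussianReal 0 v) P) (hc : c ^ 2 = 1) :
    HasLaw (fun ω ↦ c * Y ω) (gaussianReal 0 v) P := by
  have hv : NNReal.mk (c ^ 2) (sq_nonneg c) * v = v := by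
    rw [show NNReal.mk (c ^ 2) (sq_nonneg c) = 1 from NNReal.eq hc, one_mul]
  simpa only [mul_zero, hv] using gaussianReal_const_mul hY c

lemma measure_const_mul_le_abs_mul (hY : HasLaw Y (gaussianReal 0 1) P) {b : ℝ} (hb : b ≠ 0)
    (x : ℝ) : P {ω | b * Y ω ≤ |b| * x} = ENNReal.ofReal (stdCdf x) := by
  have hsign : (b / |b|) ^ 2 = 1 := by
    rw [div_pow, sq_abs, div_self (pow_ne_zero 2 hb)]
  have hdiv (ω : Ω) : b * Y ω ≤ |b| * x ↔ b / |b| * Y ω ≤ x := by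
    rw [div_mul_eq_mul_div, div_le_iff₀' (abs_pos.2 hb)]
  simp only [hdiv]
  rw [(hasLaw_const_mul_gaussianReal_of_sq_eq_one hY hsign).measure_eq measurableSet_Iic,
    stdCdf_eq_cdf, ofReal_cdf, Iic_def]

lemma measure_stdCdf_add_const_mul_le (hY : HasLaw Y (gaussianReal 0 1) P) (a : ℝ) {b ν : ℝ}
    (hb : b ≠ 0) (hν : ν ∈ Ioo 0 1) :
    P {ω | stdCdf (a + b * Y ω) ≤ stdCdf (a + |b| * stdCdfInv ν)} = ENNReal.ofReal ν := by
  simp only [stdCdf_strictMono.le_iff_le, add_le_add_iff_left]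
  rw [measure_const_mul_le_abs_mul hY hb, stdCdf_stdCdfInv hν]

end Gaussian

/-- percentile formula: if `Λ ≠ 0` and `L̄ = Φ(Ξ/(ζ√T) − ΛY/ζ)` with `Y`
standard normal, then for every `ν ∈ (0,1)` the value
`L_ν = Φ((ΣΦ⁻¹(p) + |Λ|Φ⁻¹(ν))/ζ)` satisfies `ℙ[L̄ ≤ L_ν] = ν`, where `p = Φ(Ξ/(Σ√T))`. -/
theorem percentile_formula
    {Ω : Type*} [MeasurableSpace Ω] (P : Measure Ω) [IsProbabilityMeasure P]
    (T A B μ α σ β ρ θ : ℝ)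
    (hT : 0 < T) (hA : 0 < A) (hB : 0 < B) (hσ : 0 < σ) (hβ : 0 < β)
    (hρ : ρ ∈ Set.Icc (0 : ℝ) 1) (hθ : θ ∈ Set.Icc (0 : ℝ) 1)
    (Y : Ω → ℝ) (hmY : Measurable Y)
    (hY : Measure.map Y P = gaussianReal 0 1)
    (Sg Ξ ζ Λ : ℝ)
    (hSg : Sg = Real.sqrt (σ ^ 2 + β ^ 2 - 2 * σ * β * Real.sqrt (ρ * θ)))
    (hΞ : Ξ = Real.log (B / A) - (μ - α - (σ ^ 2 - β ^ 2) / 2) * T)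
    (hζ : ζ = Real.sqrt (σ ^ 2 * (1 - ρ) + β ^ 2 * (1 - θ)))
    (hΛ : Λ = σ * Real.sqrt ρ - β * Real.sqrt θ)
    (hSgpos : 0 < Sg) (hζpos : 0 < ζ) (hΛne : Λ ≠ 0)
    (p : ℝ) (hp : p = stdCdf (Ξ / (Sg * Real.sqrt T)))
    (ν : ℝ) (hν : ν ∈ Set.Ioo (0 : ℝ) 1)
    (Lν : ℝ) (hLν : Lν = stdCdf ((Sg * stdCdfInv p + |Λ| * stdCdfInv ν) / ζ)) :
    P {ω | stdCdf (Ξ / (ζ * Real.sqrt T) - Λ * Y ω / ζ) ≤ Lν} = ENNReal.ofReal ν := by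
  have hsqrtT : √T ≠ 0 := (Real.sqrt_pos.2 hT).ne'
  have hslope : |-Λ / ζ| = |Λ| / ζ := by rw [abs_div, abs_neg, abs_of_pos hζpos]
  have hLν' : Lν = stdCdf (Ξ / (ζ * √T) + |-Λ / ζ| * stdCdfInv ν) := by
    rw [hLν, hp, stdCdfInv_stdCdf, hslope]
    congr 1
    field_simp
  have harg (ω : Ω) : Ξ / (ζ * √T) - Λ * Y ω / ζ = Ξ / (ζ * √T) + -Λ / ζ * Y ω := by ring
  simp only [harg, hLν']
  exact measure_stdCdf_add_const_mul_le ⟨hmY.aemeasurable, hY⟩ _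
    (div_ne_zero (neg_ne_zero.2 hΛne) hζpos.ne') hν
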